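/- Under Assumption 1, let i ∈ [m], let U, W ⊆ [m]∖{i}, and set V = U ∩ W. If I(X_{W∖V} → X_i ‖ X_U) = 0 and I(X_{U∖V} → X_i ‖ X_W) = 0, then I(X_{(U∪W)∖V} → X_i ‖ X_V) = 0. -/

import Mathlib

open Finset

/-- Probability of an event under the probability mass function `p` on a finite space. -/
noncomputable def pr {Ω : Type} [Fintype Ω] (p : Ω → ℝ) (E : Set Ω) : ℝ :=
  ∑ ω : Ω, E.indicator p ω

/-- Shannon conditional mutual information `I(A ; B | C)` of finite-valued random variables
on a finite probability space with pmf `p` (terms with vanishing probability contribute `0`,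
by the conventions `Real.log 0 = 0`, `x / 0 = 0`). -/
noncomputable def cmi {Ω α β γ : Type} [Fintype Ω] [Fintype α] [Fintype β] [Fintype γ]
    (p : Ω → ℝ) (A : Ω → α) (B : Ω → β) (C : Ω → γ) : ℝ :=
  ∑ a : α, ∑ b : β, ∑ c : γ,
    pr p {ω | A ω = a ∧ B ω = b ∧ C ω = c} *
      Real.log (pr p {ω | A ω = a ∧ B ω = b ∧ C ω = c} * pr p {ω | C ω = c} /
        (pr p {ω | A ω = a ∧ C ω = c} * pr p {ω | B ω = b ∧ C ω = c}))

/-- `A` and `B` are conditionally independent given `C` (under the pmf `p`). -/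
def CondIndep {Ω α β γ : Type} [Fintype Ω] (p : Ω → ℝ)
    (A : Ω → α) (B : Ω → β) (C : Ω → γ) : Prop :=
  ∀ (a : α) (b : β) (c : γ),
    pr p {ω | A ω = a ∧ B ω = b ∧ C ω = c} * pr p {ω | C ω = c}
      = pr p {ω | A ω = a ∧ C ω = c} * pr p {ω | B ω = b ∧ C ω = c}

/-- Trajectories of `m` processes over `n` time steps with alphabet `𝒳`:
`ω i j` is the value of process `i` at (0-indexed) time `j`. -/
abbrev Traj (m n : ℕ) (𝒳 : Type) := Fin m → Fin n → 𝒳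

/-- The past `X_S^{j-1}`: the values of the processes in `S` at times strictly before `j`;
all other entries are masked by `none`. -/
def past {m n : ℕ} {𝒳 : Type} (S : Finset (Fin m)) (j : Fin n) (ω : Traj m n 𝒳) :
    Fin m → Fin n → Option 𝒳 :=
  fun k t => if k ∈ S ∧ t < j then some (ω k t) else none

/-- Causally conditioned directed information
`I(X_S → X_i ‖ X_T) := Σ_{j=1}^{n} I(X_S^{j-1} ; X_{i,j} | X_i^{j-1}, X_T^{j-1})`. -/
noncomputable def di {m n : ℕ} {𝒳 : Type} [Fintype 𝒳] [DecidableEq 𝒳]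
    (p : Traj m n 𝒳 → ℝ) (S : Finset (Fin m)) (i : Fin m) (T : Finset (Fin m)) : ℝ :=
  ∑ j : Fin n,
    cmi p (past S j) (fun ω => ω i j) (fun ω => (past {i} j ω, past T j ω))

/-- Assumption 1: the joint distribution is strictly positive (and is a pmf), and at each
time `j` the variables `X_{1,j}, …, X_{m,j}` are mutually conditionally independent given
the full past `X_{[m]}^{j-1}` (stated in the division-free form
`P(joint ∧ past) · P(past)^{m-1} = Π_i P(X_{i,j} = x_i ∧ past)`). -/
def Assumption1 {m n : ℕ} {𝒳 : Type} [Fintype 𝒳] [DecidableEq 𝒳]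
    (p : Traj m n 𝒳 → ℝ) : Prop :=
  (∀ ω, 0 < p ω) ∧ (∑ ω : Traj m n 𝒳, p ω = 1) ∧
    ∀ (j : Fin n) (x : Fin m → 𝒳) (h : Fin m → Fin n → Option 𝒳),
      pr p {ω | (∀ i, ω i j = x i) ∧ past Finset.univ j ω = h} *
          pr p {ω | past Finset.univ j ω = h} ^ (m - 1)
        = ∏ i : Fin m, pr p {ω | ω i j = x i ∧ past Finset.univ j ω = h}

/-- `S ⊆ [m]∖{i}` is a causal Markov blanket of `X_i` if
`I(X_{[m]∖({i}∪S)} → X_i ‖ X_S) = 0`. -/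
def IsCausalBlanket {m n : ℕ} {𝒳 : Type} [Fintype 𝒳] [DecidableEq 𝒳]
    (p : Traj m n 𝒳 → ℝ) (i : Fin m) (S : Finset (Fin m)) : Prop :=
  S ⊆ Finset.univ.erase i ∧ di p (Finset.univ.erase i \ S) i S = 0

/-- A causal Markov boundary `A(i)` of `X_i` is a causal Markov blanket of minimum
cardinality. -/
def IsCausalBoundary {m n : ℕ} {𝒳 : Type} [Fintype 𝒳] [DecidableEq 𝒳]
    (p : Traj m n 𝒳 → ℝ) (i : Fin m) (A : Finset (Fin m)) : Prop :=
  IsCausalBlanket p i A ∧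
    ∀ B : Finset (Fin m), IsCausalBlanket p i B → A.card ≤ B.card

section FiniteProbability

variable {Ω α β γ δ ε ζ : Type} [Fintype Ω] {p : Ω → ℝ}

lemma pr_nonneg (hp : ∀ ω, 0 < p ω) (E : Set Ω) : 0 ≤ pr p E :=
  Finset.sum_nonneg fun _ _ => Set.indicator_nonneg (fun ω _ => (hp ω).le) _

lemma pr_mono (hp : ∀ ω, 0 < p ω) {E F : Set Ω} (h : E ⊆ F) : pr p E ≤ pr p F :=
  Finset.sum_le_sum fun ω _ =>
    Set.indicator_le_indicator_of_subset h (fun ω => (hp ω).le) ω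

lemma pr_pos (hp : ∀ ω, 0 < p ω) {E : Set Ω} {ω : Ω} (h : ω ∈ E) : 0 < pr p E := by
  refine Finset.sum_pos' (fun _ _ => Set.indicator_nonneg (fun ω _ => (hp ω).le) _)
    ⟨ω, Finset.mem_univ ω, ?_⟩
  rw [Set.indicator_of_mem h]
  exact hp ω

lemma pr_empty : pr p ∅ = 0 := by simp [pr]

/-- Marginalization over the values of a random variable. -/
lemma sum_pr_eq [Fintype α] (A : Ω → α) (Q : Ω → Prop) :
    ∑ a, pr p {ω | A ω = a ∧ Q ω} = pr p {ω | Q ω} := by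
  classical
  unfold pr
  rw [Finset.sum_comm]
  refine Finset.sum_congr rfl fun ω _ => ?_
  simp only [Set.indicator_apply, Set.mem_ofPred_eq]
  by_cases hQ : Q ω <;> simp [hQ]

/-- The pointwise Gibbs inequality, with its equality case. -/
lemma sub_le_mul_log {x c u v : ℝ} (hx : 0 ≤ x) (hc : x ≤ c) (hu : x ≤ u) (hv : x ≤ v) :
    x - u * v / c ≤ x * Real.log (x * c / (u * v)) ∧
      (x * Real.log (x * c / (u * v)) = x - u * v / c → c ≠ 0 → x * c = u * v) := by
  rcases hx.eq_or_lt with rfl | hx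
  · refine ⟨?_, fun h hc0 => ?_⟩
    · have : 0 ≤ u * v / c := by positivity
      simpa using this
    · have h' : u * v / c = 0 := by linarith
      rw [div_eq_zero_iff] at h'
      simp [h'.resolve_right hc0]
  · have hc' := hx.trans_le hc
    have hu' := hx.trans_le hu
    have hv' := hx.trans_le hv
    set t := x * c / (u * v) with ht
    have ht0 : 0 < t := by positivity
    have hxt : u * v / c = x * t⁻¹ := by rw [ht]; field_simp
    have hlog : Real.log t = -Real.log t⁻¹ := by rw [Real.log_inv]; ring
    have hti : 0 < t⁻¹ := by positivity
    refine ⟨?_, fun h _ => ?_⟩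
    · rw [hxt, hlog]
      nlinarith [Real.log_le_sub_one_of_pos hti]
    · by_contra hne
      have ht1 : t⁻¹ ≠ 1 := by
        intro h1
        rw [inv_eq_one, ht, div_eq_one_iff_eq (by positivity)] at h1
        exact hne h1
      have := Real.log_lt_sub_one_of_pos hti ht1
      rw [hxt, hlog] at h
      nlinarith

/-- Conditional mutual information is nonnegative and vanishes exactly under conditional independence. -/
lemma cmi_eq_zero_iff_and_nonneg [Fintype α] [Fintype β] [Fintype γ] (hp : ∀ ω, 0 < p ω)
    (A : Ω → α) (B : Ω → β) (C : Ω → γ) :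
    0 ≤ cmi p A B C ∧ (cmi p A B C = 0 ↔ CondIndep p A B C) := by
  have key (a : α) (b : β) (c : γ) := sub_le_mul_log
    (pr_nonneg hp {ω | A ω = a ∧ B ω = b ∧ C ω = c})
    (pr_mono (F := {ω | C ω = c}) hp fun ω h => h.2.2)
    (pr_mono (F := {ω | A ω = a ∧ C ω = c}) hp fun ω h => ⟨h.1, h.2.2⟩)
    (pr_mono (F := {ω | B ω = b ∧ C ω = c}) hp fun ω h => h.2)
  have hsum : ∑ a, ∑ b, ∑ c, (pr p {ω | A ω = a ∧ B ω = b ∧ C ω = c} -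
      pr p {ω | A ω = a ∧ C ω = c} * pr p {ω | B ω = b ∧ C ω = c} / pr p {ω | C ω = c}) = 0 := by
    have hswap (f : α → β → γ → ℝ) : ∑ a, ∑ b, ∑ c, f a b c = ∑ c, ∑ b, ∑ a, f a b c := by
      rw [Finset.sum_comm, Finset.sum_comm (s := (univ : Finset γ))]
      exact Finset.sum_congr rfl fun b _ => Finset.sum_comm
    rw [hswap]
    refine Finset.sum_eq_zero fun c _ => ?_
    simp only [Finset.sum_sub_distrib, ← Finset.sum_div, ← Finset.sum_mul, ← Finset.mul_sum,
      sum_pr_eq]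
    rw [mul_self_div_self, sub_self]
  have hnonneg : 0 ≤ cmi p A B C := by
    rw [← hsum]
    exact Finset.sum_le_sum fun a _ => Finset.sum_le_sum fun b _ => Finset.sum_le_sum
      fun c _ => (key a b c).1
  refine ⟨hnonneg, fun h a b c => ?_, fun h => ?_⟩
  · rw [← hsum, eq_comm] at h
    unfold cmi at h
    rw [Finset.sum_eq_sum_iff_of_le fun a _ => Finset.sum_le_sum fun b _ =>
      Finset.sum_le_sum fun c _ => (key a b c).1] at h
    have h := h a (mem_univ a)
    rw [Finset.sum_eq_sum_iff_of_le fun b _ =>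
      Finset.sum_le_sum fun c _ => (key a b c).1] at h
    have h := h b (mem_univ b)
    rw [Finset.sum_eq_sum_iff_of_le fun c _ => (key a b c).1] at h
    have h := h c (mem_univ c)
    by_cases hc : pr p {ω | C ω = c} = 0
    · have : pr p {ω | A ω = a ∧ C ω = c} = 0 :=
        le_antisymm (hc ▸ pr_mono hp fun ω h => h.2) (pr_nonneg hp _)
      rw [hc, this]
      simp
    · exact (key a b c).2 h.symm hc
  · refine Finset.sum_eq_zero fun a _ => Finset.sum_eq_zero fun b _ =>
      Finset.sum_eq_zero fun c _ => ?_
    rw [h a b c]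
    rcases eq_or_ne (pr p {ω | A ω = a ∧ C ω = c} * pr p {ω | B ω = b ∧ C ω = c}) 0 with h0 | h0
    · simp [h0]
    · simp [div_self h0]

/-- `B` and `F` are conditionally independent given the coarser variable `G`, i.e.
`P(B = b | F) = P(B = b | G)` for every `b`, in division-free form. -/
def Screens (p : Ω → ℝ) (B : Ω → β) (F : Ω → δ) (G : Ω → ε) : Prop :=
  ∀ (ω₀ : Ω) (b : β),
    pr p {ω | B ω = b ∧ F ω = F ω₀} * pr p {ω | G ω = G ω₀}
      = pr p {ω | F ω = F ω₀} * pr p {ω | B ω = b ∧ G ω = G ω₀}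

lemma condIndep_iff_screens {A : Ω → α} {B : Ω → β} {C : Ω → γ} {F : Ω → δ} {G : Ω → ε}
    (hF : ∀ ω ω', F ω = F ω' ↔ A ω = A ω' ∧ C ω = C ω')
    (hG : ∀ ω ω', G ω = G ω' ↔ C ω = C ω') :
    CondIndep p A B C ↔ Screens p B F G := by
  have hset (ω₀ : Ω) (b : β) : {ω | B ω = b ∧ A ω = A ω₀ ∧ C ω = C ω₀} =
      {ω | A ω = A ω₀ ∧ B ω = b ∧ C ω = C ω₀} := by
    ext ω
    simp only [Set.mem_ofPred_eq]
    tauto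
  simp only [Screens, hF, hG, hset]
  refine ⟨fun h ω₀ b => h _ b _, fun h a b c => ?_⟩
  by_cases hac : ∃ ω₀, A ω₀ = a ∧ C ω₀ = c
  · obtain ⟨ω₀, rfl, rfl⟩ := hac
    exact h ω₀ b
  · have h1 : {ω | A ω = a ∧ C ω = c} = ∅ :=
      Set.eq_empty_of_forall_notMem fun ω h => hac ⟨ω, h⟩
    have h2 : {ω | A ω = a ∧ B ω = b ∧ C ω = c} = ∅ :=
      Set.eq_empty_of_forall_notMem fun ω h => hac ⟨ω, h.1, h.2.2⟩
    rw [h1, h2, pr_empty]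
    simp

/-- The intersection property of conditional independence for strictly positive pmfs. -/
lemma Screens.inter [Fintype δ] (hp : ∀ ω, 0 < p ω)
    {B : Ω → β} {F : Ω → δ} {G₁ : Ω → ε} {G₂ : Ω → ζ} {G : Ω → γ}
    (h₁ : Screens p B F G₁) (h₂ : Screens p B F G₂)
    (hFG : ∀ ω ω', F ω = F ω' → G ω = G ω')
    (hglue : ∀ ω ω', G ω = G ω' → ∃ ω'', G₁ ω'' = G₁ ω ∧ G₂ ω'' = G₂ ω') :
    Screens p B F G := by
  intro ω₀ b
  have hpos {η : Type} (K : Ω → η) (ω₁ : Ω) : pr p {ω | K ω = K ω₁} ≠ 0 :=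
    (pr_pos (E := {ω | K ω = K ω₁}) (ω := ω₁) hp rfl).ne'
  have hdiv {η : Type} {K : Ω → η} (h : Screens p B F K) (ω₁ : Ω) :
      pr p {ω | B ω = b ∧ F ω = F ω₁} / pr p {ω | F ω = F ω₁} =
        pr p {ω | B ω = b ∧ K ω = K ω₁} / pr p {ω | K ω = K ω₁} := by
    rw [div_eq_div_iff (hpos F ω₁) (hpos K ω₁), h ω₁ b, mul_comm]
  set q := pr p {ω | B ω = b ∧ F ω = F ω₀} / pr p {ω | F ω = F ω₀} with hq
  have hconst (ω₁ : Ω) (hω₁ : G ω₁ = G ω₀) :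
      pr p {ω | B ω = b ∧ F ω = F ω₁} = q * pr p {ω | F ω = F ω₁} := by
    obtain ⟨ω₂, e₁, e₂⟩ := hglue ω₁ ω₀ hω₁
    rw [← div_eq_iff (hpos F ω₁), hdiv h₁ ω₁, ← e₁, ← hdiv h₁ ω₂, hdiv h₂ ω₂, e₂,
      ← hdiv h₂ ω₀]
  have hG : pr p {ω | B ω = b ∧ G ω = G ω₀} = q * pr p {ω | G ω = G ω₀} := by
    rw [← sum_pr_eq F, ← sum_pr_eq F, Finset.mul_sum]
    refine Finset.sum_congr rfl fun f _ => ?_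
    by_cases hf : ∃ ω₁, F ω₁ = f ∧ G ω₁ = G ω₀
    · obtain ⟨ω₁, rfl, hω₁⟩ := hf
      have hF (ω : Ω) (h : F ω = F ω₁) : G ω = G ω₀ := (hFG ω ω₁ h).trans hω₁
      convert hconst ω₁ hω₁ using 3
      · ext ω
        exact ⟨fun h => ⟨h.2.1, h.1⟩, fun h => ⟨h.2, h.1, hF ω h.2⟩⟩
      · ext ω
        exact ⟨fun h => h.1, fun h => ⟨h, hF ω h⟩⟩
    · have e₁ : {ω | F ω = f ∧ B ω = b ∧ G ω = G ω₀} = ∅ :=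
        Set.eq_empty_of_forall_notMem fun ω h => hf ⟨ω, h.1, h.2.2⟩
      have e₂ : {ω | F ω = f ∧ G ω = G ω₀} = ∅ :=
        Set.eq_empty_of_forall_notMem fun ω h => hf ⟨ω, h⟩
      rw [e₁, e₂, pr_empty, mul_zero]
  rw [hconst ω₀ rfl, hG]
  ring

end FiniteProbability

section DirectedInformation

variable {m n : ℕ} {𝒳 : Type}

lemma past_eq_past_iff {S : Finset (Fin m)} {j : Fin n} {ω ω' : Traj m n 𝒳} :
    past S j ω = past S j ω' ↔ ∀ k ∈ S, ∀ t < j, ω k t = ω' k t := by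
  simp only [funext_iff, past]
  refine ⟨fun h k hk t ht => by simpa [hk, ht] using h k t, fun h k t => ?_⟩
  by_cases hkt : k ∈ S ∧ t < j
  · simp [hkt, h k hkt.1 t hkt.2]
  · simp [hkt]

/-- Vanishing directed information in terms of the pasts of unions of index sets. -/
lemma di_eq_zero_iff [Fintype 𝒳] [DecidableEq 𝒳] {p : Traj m n 𝒳 → ℝ} (hp : ∀ ω, 0 < p ω)
    {S T R : Finset (Fin m)} {i : Fin m} (hR : R = S ∪ T) :
    di p S i T = 0 ↔
      ∀ j, Screens p (fun ω => ω i j) (past (insert i R) j) (past (insert i T) j) := by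
  unfold di
  rw [Finset.sum_eq_zero_iff_of_nonneg fun j _ => (cmi_eq_zero_iff_and_nonneg hp _ _ _).1]
  simp only [mem_univ, true_imp_iff]
  refine forall_congr' fun j => (cmi_eq_zero_iff_and_nonneg hp _ _ _).2.trans
    (condIndep_iff_screens (fun ω ω' => ?_) fun ω ω' => ?_)
  · subst hR
    simp only [Prod.mk.injEq, past_eq_past_iff, Finset.forall_mem_insert, Finset.forall_mem_union,
      Finset.mem_singleton, forall_eq]
    tauto
  · simp only [Prod.mk.injEq, past_eq_past_iff, Finset.forall_mem_insert,
      Finset.mem_singleton, forall_eq]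

end DirectedInformation

/-- intersection property. Under Assumption 1, for `i ∈ [m]`,
`U, W ⊆ [m]∖{i}` and `V = U ∩ W`: if `I(X_{W∖V} → X_i ‖ X_U) = 0` and
`I(X_{U∖V} → X_i ‖ X_W) = 0`, then `I(X_{(U∪W)∖V} → X_i ‖ X_V) = 0`. -/
theorem stmt_3 {m n : ℕ} (hm : 2 ≤ m) (hn : 1 ≤ n)
    {𝒳 : Type} [Fintype 𝒳] [DecidableEq 𝒳] [Nonempty 𝒳]
    (p : Traj m n 𝒳 → ℝ) (hp : Assumption1 p)
    (i : Fin m) (U W : Finset (Fin m))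
    (hU : U ⊆ Finset.univ.erase i) (hW : W ⊆ Finset.univ.erase i)
    (h1 : di p (W \ (U ∩ W)) i U = 0)
    (h2 : di p (U \ (U ∩ W)) i W = 0) :
    di p ((U ∪ W) \ (U ∩ W)) i (U ∩ W) = 0 := by
  have hpos := hp.1
  rw [di_eq_zero_iff hpos (R := U ∪ W) (by grind)] at h1 h2 ⊢
  intro j
  refine (h1 j).inter hpos (h2 j) (fun ω ω' h => ?_) fun ω ω' h => ?_
  · rw [past_eq_past_iff] at h ⊢
    exact fun k hk => h k (by grind)
  · refine ⟨fun k => if k ∈ insert i U then ω k else ω' k, ?_⟩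
    simp only [past_eq_past_iff] at h ⊢
    refine ⟨fun k hk t _ => by rw [if_pos hk], fun k hk t ht => ?_⟩
    split_ifs with hk'
    · exact h k (by grind) t ht
    · rfl
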